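/- Let G ⊆ UT(n,ℝ) be a real unipotent group and let H, N be real algebraic subgroups of G with N normal in G. Let α ∈ G^♯ and assume that there are b, c ∈ G such that the cosets bN and cH are both near α. Then bN ∩ cH ≠ ∅, the set bN ∩ cH is a coset of N ∩ H, and the coset bN ∩ cH is near α. -/

import Mathlib

open Pointwise Filter

noncomputable section

/-- Square matrices of size `n` over `R`. -/
abbrev Mat (n : ℕ) (R : Type) : Type := Matrix (Fin n) (Fin n) R

/-- The set `UT(n,ℝ)` of upper triangular matrices with `1`s on the diagonal. -/
def UTset (n : ℕ) : Set (Mat n ℝ) :=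
  {A | (∀ i, A i i = 1) ∧ ∀ i j : Fin n, (j : ℕ) < (i : ℕ) → A i j = 0}

/-- The entries of a matrix, as a point of `ℝ^(n²)`. -/
def matEval {n : ℕ} (A : Mat n ℝ) : Fin n × Fin n → ℝ := fun ij => A ij.1 ij.2

/-- A real unipotent group: a subgroup of `UT(n,ℝ)` which is the common zero set in
`UT(n,ℝ)` of a family of real polynomials in the matrix entries. -/
def IsRealUnipotentGroup (n : ℕ) (G : Set (Mat n ℝ)) : Prop :=
  (∃ S : Set (MvPolynomial (Fin n × Fin n) ℝ),
      G = {A | A ∈ UTset n ∧ ∀ p ∈ S, MvPolynomial.eval (matEval A) p = 0}) ∧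
    (1 : Mat n ℝ) ∈ G ∧ (∀ a ∈ G, ∀ b ∈ G, a * b ∈ G) ∧ ∀ a ∈ G, a⁻¹ ∈ G

/-- A real algebraic subgroup of a real unipotent group `G`. -/
def IsRealAlgSubgroup (n : ℕ) (G H : Set (Mat n ℝ)) : Prop :=
  H ⊆ G ∧ IsRealUnipotentGroup n H

/-- `N` is a normal subgroup-set of `G`. -/
def IsNormalIn (n : ℕ) (G N : Set (Mat n ℝ)) : Prop :=
  ∀ g ∈ G, ∀ x ∈ N, g * x * g⁻¹ ∈ N

/-- `Γ` is a lattice in `G`: a discrete subgroup which is cocompact, i.e. there is a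
compact `K ⊆ G` with `K·Γ = G` (equivalently, `G/Γ` is compact). -/
def IsLatticeIn (n : ℕ) (G Γ : Set (Mat n ℝ)) : Prop :=
  Γ ⊆ G ∧ (1 : Mat n ℝ) ∈ Γ ∧ (∀ a ∈ Γ, ∀ b ∈ Γ, a * b ∈ Γ) ∧ (∀ a ∈ Γ, a⁻¹ ∈ Γ) ∧
    DiscreteTopology ↥Γ ∧
    ∃ K : Set (Mat n ℝ), K ⊆ G ∧ IsCompact K ∧ ∀ g ∈ G, ∃ k ∈ K, ∃ γ ∈ Γ, g = k * γ

/-- `H` is `Γ`-rational: `Γ ∩ H` is a lattice in `H`. -/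
def IsRationalFor (n : ℕ) (Γ H : Set (Mat n ℝ)) : Prop :=
  IsLatticeIn n H (Γ ∩ H)

/-- The hyperreal matrix represented by a sequence of real matrices. -/
def matOfSeq (n : ℕ) (u : ℕ → Mat n ℝ) : Mat n Hyperreal :=
  Matrix.of fun i j => Hyperreal.ofSeq fun k => u k i j

/-- The nonstandard extension `S^♯` of a set `S` of real matrices: hyperreal matrices
represented by sequences landing in `S` on a set of indices in the ultrafilter. -/
def matSharp (n : ℕ) (S : Set (Mat n ℝ)) : Set (Mat n Hyperreal) :=
  {A | ∃ u : ℕ → Mat n ℝ, (∀ᶠ k in hyperfilter ℕ, u k ∈ S) ∧ A = matOfSeq n u}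

/-- The canonical embedding of real matrices into hyperreal matrices. -/
def matCast {n : ℕ} (A : Mat n ℝ) : Mat n Hyperreal :=
  Matrix.of fun i j => (A i j : Hyperreal)

/-- `μ(G)`: elements of `G^♯` all of whose entries are infinitesimally close to the
corresponding entries of the identity matrix. -/
def muSet (n : ℕ) (G : Set (Mat n ℝ)) : Set (Mat n Hyperreal) :=
  {A | A ∈ matSharp n G ∧ ∀ i j, Hyperreal.Infinitesimal (A i j - (1 : Mat n Hyperreal) i j)}

/-- The coset `gH` is near `α`, i.e. `α ∈ μ(G)·g·H^♯`. -/
def NearCoset (n : ℕ) (G : Set (Mat n ℝ)) (g : Mat n ℝ) (H : Set (Mat n ℝ))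
    (α : Mat n Hyperreal) : Prop :=
  α ∈ muSet n G * ({matCast g} * matSharp n H)

/-- The set of standard parts of the finite elements of a set of hyperreal matrices. -/
def matStSet (n : ℕ) (A : Set (Mat n Hyperreal)) : Set (Mat n ℝ) :=
  {B | ∃ a ∈ A, ∀ i j, Hyperreal.IsSt (a i j) (B i j)}

/-- A polynomial map `ℝ^d → Mat n ℝ`. -/
def IsPolyMapVec (d n : ℕ) (F : (Fin d → ℝ) → Mat n ℝ) : Prop :=
  ∃ P : Fin n → Fin n → MvPolynomial (Fin d) ℝ,
    ∀ x i j, F x i j = MvPolynomial.eval x (P i j)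

/-- The inclusion `ℝ →+* ℝ*` as a ring homomorphism. -/
def realHyperRingHom : ℝ →+* Hyperreal where
  toFun r := (r : Hyperreal)
  map_one' := Hyperreal.coe_one
  map_mul' := Hyperreal.coe_mul
  map_zero' := Hyperreal.coe_zero
  map_add' := Hyperreal.coe_add

/-- A semialgebraic subset of matrix space: a finite union of sets defined by finitely
many polynomial equations and finitely many strict polynomial inequalities. -/
def IsSemialgebraic (n : ℕ) (S : Set (Mat n ℝ)) : Prop :=
  ∃ (k : ℕ) (P Q : Fin k → Finset (MvPolynomial (Fin n × Fin n) ℝ)),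
    S = ⋃ t : Fin k, {A | (∀ p ∈ P t, MvPolynomial.eval (matEval A) p = 0) ∧
      ∀ q ∈ Q t, 0 < MvPolynomial.eval (matEval A) q}



open Topology

lemma ut_upper {n : ℕ} {A : Mat n ℝ} (h : A ∈ UTset n) : Matrix.IsUpperTriangular A := by
  intro i j hij
  exact h.2 i j hij

lemma ut_det {n : ℕ} {A : Mat n ℝ} (h : A ∈ UTset n) : A.det = 1 := by
  rw [Matrix.det_of_isUpperTriangular (ut_upper h)]
  simp [h.1]

lemma ut_nil {n : ℕ} {A : Mat n ℝ} (h : A ∈ UTset n) : (A - 1) ^ n = 0 := by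
  have h1 := Matrix.charpoly_of_isUpperTriangular A (ut_upper h)
  have h2 := Matrix.aeval_self_charpoly A
  rw [h1] at h2
  simpa [h.1] using h2

lemma ut_inv {n : ℕ} {A : Mat n ℝ} (h : A ∈ UTset n) : A⁻¹ = A.adjugate := by
  rw [Matrix.inv_def, ut_det h]; simp

lemma alg_ut {n : ℕ} {K : Set (Mat n ℝ)} (h : IsRealUnipotentGroup n K) {A : Mat n ℝ}
    (hA : A ∈ K) : A ∈ UTset n := by
  obtain ⟨⟨S, rfl⟩, -⟩ := h
  exact hA.1

lemma alg_unit {n : ℕ} {K : Set (Mat n ℝ)} (h : IsRealUnipotentGroup n K) {A : Mat n ℝ}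
    (hA : A ∈ K) : IsUnit A.det := by
  rw [ut_det (alg_ut h hA)]; exact isUnit_one

lemma alg_closed {n : ℕ} {K : Set (Mat n ℝ)} (h : IsRealUnipotentGroup n K) : IsClosed K := by
  obtain ⟨⟨S, rfl⟩, -⟩ := h
  have hc : Continuous (fun A : Mat n ℝ => matEval A) := by
    unfold matEval; fun_prop
  have : {A : Mat n ℝ | A ∈ UTset n ∧ ∀ p ∈ S, MvPolynomial.eval (matEval A) p = 0}
      = ({A | ∀ i, A i i = 1} ∩ {A | ∀ i j : Fin n, (j : ℕ) < (i : ℕ) → A i j = 0}) ∩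
        {A | ∀ p ∈ S, MvPolynomial.eval (matEval A) p = 0} := by
    ext A; rfl
  rw [this]
  refine IsClosed.inter (IsClosed.inter ?_ ?_) ?_
  · simp only [Set.ofPred_forall]
    exact isClosed_iInter fun i => isClosed_eq (by fun_prop) continuous_const
  · simp only [Set.ofPred_forall]
    exact isClosed_iInter fun i => isClosed_iInter fun j => isClosed_iInter fun _ =>
      isClosed_eq (by fun_prop) continuous_const
  · simp only [Set.ofPred_forall]
    exact isClosed_iInter fun p => isClosed_iInter fun _ =>
      isClosed_eq ((MvPolynomial.continuous_eval p).comp hc) continuous_const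

lemma alg_pow {n : ℕ} {K : Set (Mat n ℝ)} (h : IsRealUnipotentGroup n K) {A : Mat n ℝ}
    (hA : A ∈ K) (k : ℕ) : A ^ k ∈ K := by
  induction k with
  | zero => simpa using h.2.1
  | succ k ih => rw [pow_succ]; exact h.2.2.1 _ ih _ hA

/-- A matrix-valued function of one real variable with polynomial entries. -/
def PolyCurve {n : ℕ} (γ : ℝ → Mat n ℝ) : Prop :=
  ∀ i j, ∃ q : Polynomial ℝ, ∀ t, γ t i j = q.eval t

lemma PolyCurve.mul {n : ℕ} {γ δ : ℝ → Mat n ℝ} (h : PolyCurve γ) (h' : PolyCurve δ) :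
    PolyCurve (fun t => γ t * δ t) := by
  intro i j
  choose q hq using h
  choose r hr using h'
  refine ⟨∑ l, q i l * r l j, fun t => ?_⟩
  simp [Matrix.mul_apply, Polynomial.eval_finsetSum, hq, hr]

lemma PolyCurve.const {n : ℕ} (A : Mat n ℝ) : PolyCurve (fun _ => A) :=
  fun i j => ⟨Polynomial.C (A i j), by simp⟩

lemma PolyCurve.pow {n : ℕ} {γ : ℝ → Mat n ℝ} (h : PolyCurve γ) (k : ℕ) :
    PolyCurve (fun t => γ t ^ k) := by
  induction k with
  | zero => simpa using PolyCurve.const (1 : Mat n ℝ)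
  | succ k ih => simpa [pow_succ] using ih.mul h

lemma PolyCurve.comp {n : ℕ} {γ : ℝ → Mat n ℝ} (h : PolyCurve γ) (c : ℝ) :
    PolyCurve (fun t => γ (c * t)) := by
  intro i j
  obtain ⟨q, hq⟩ := h i j
  exact ⟨q.comp (Polynomial.C c * Polynomial.X), fun t => by simp [hq]⟩

lemma poly_zero_of_nat (q : Polynomial ℝ) (r : Polynomial ℝ)
    (h : ∀ k : ℕ, q.eval (k : ℝ) = r.eval (k : ℝ)) :
    q = r := by
  apply Polynomial.eq_of_infinite_eval_eq
  apply (Set.infinite_range_of_injective (Nat.cast_injective (R := ℝ))).mono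
  rintro _ ⟨k, rfl⟩
  exact h k

lemma PolyCurve.ext {n : ℕ} {γ δ : ℝ → Mat n ℝ} (h : PolyCurve γ) (h' : PolyCurve δ)
    (hk : ∀ k : ℕ, γ k = δ k) (t : ℝ) : γ t = δ t := by
  ext i j
  obtain ⟨q, hq⟩ := h i j
  obtain ⟨r, hr⟩ := h' i j
  have := poly_zero_of_nat q r (fun k => by rw [← hq, ← hr, hk])
  rw [hq, hr, this]

lemma eval_aeval_poly {σ : Type*} (q : σ → Polynomial ℝ) (p : MvPolynomial σ ℝ) (s : ℝ) :
    (MvPolynomial.aeval q p).eval s = MvPolynomial.eval (fun i => (q i).eval s) p := by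
  induction p using MvPolynomial.induction_on with
  | C a => simp
  | add p q hp hq => simp [hp, hq]
  | mul_X p i hp => simp [hp]

lemma PolyCurve.mem {n : ℕ} {γ : ℝ → Mat n ℝ} (h : PolyCurve γ) {K : Set (Mat n ℝ)}
    (hK : IsRealUnipotentGroup n K) (hk : ∀ k : ℕ, γ k ∈ K) (t : ℝ) : γ t ∈ K := by
  obtain ⟨⟨S, rfl⟩, -⟩ := hK
  choose q hq using h
  refine ⟨⟨fun i => ?_, fun i j hij => ?_⟩, fun p hp => ?_⟩
  · have := poly_zero_of_nat (q i i) 1 (fun k => by rw [← hq, (hk k).1.1]; simp)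
    rw [hq, this]; simp
  · have := poly_zero_of_nat (q i j) 0 (fun k => by rw [← hq, (hk k).1.2 i j hij]; simp)
    rw [hq, this]; simp
  · have key : ∀ s, MvPolynomial.eval (matEval (γ s)) p =
        (MvPolynomial.aeval (fun ij : Fin n × Fin n => q ij.1 ij.2) p).eval s := by
      intro s
      have : matEval (γ s) = fun ij => (q ij.1 ij.2).eval s := by
        ext ij; simp [matEval, hq]
      rw [this, eval_aeval_poly]
    have := poly_zero_of_nat (MvPolynomial.aeval (fun ij : Fin n × Fin n => q ij.1 ij.2) p) 0
      (fun k => by rw [← key, (hk k).2 p hp]; simp)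
    rw [key, this]; simp

/-- A sum of powers of `B` with polynomial coefficients. -/
def psum {n : ℕ} (q : ℕ → Polynomial ℝ) (B : Mat n ℝ) (t : ℝ) : Mat n ℝ :=
  ∑ j ∈ Finset.range (n + 2), (q j).eval t • B ^ j

lemma psum_poly {n : ℕ} (q : ℕ → Polynomial ℝ) (B : Mat n ℝ) : PolyCurve (psum q B) := by
  intro i j
  refine ⟨∑ l ∈ Finset.range (n + 2), q l * Polynomial.C ((B ^ l) i j), fun t => ?_⟩
  simp [psum, Matrix.sum_apply, Polynomial.eval_finsetSum]

/-- The sequence `g` is tangent to `A` at the identity. -/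
def Tan {n : ℕ} (g : ℕ → Mat n ℝ) (A : Mat n ℝ) : Prop :=
  Tendsto (fun k : ℕ => (k : ℝ) • (g k - 1)) atTop (𝓝 A)

lemma Tan.tendsto {n : ℕ} {g : ℕ → Mat n ℝ} {A : Mat n ℝ} (h : Tan g A) :
    Tendsto g atTop (𝓝 1) := by
  have h1 : Tendsto (fun k : ℕ => ((k : ℝ)⁻¹) • ((k : ℝ) • (g k - 1)) + 1) atTop
      (𝓝 ((0 : ℝ) • A + 1)) :=
    ((tendsto_inv_atTop_nhds_zero_nat (𝕜 := ℝ)).smul h).add_const 1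
  simp only [zero_smul, zero_add] at h1
  refine h1.congr' ?_
  filter_upwards [eventually_ne_atTop 0] with k hk
  rw [inv_smul_smul₀ (by exact_mod_cast hk)]
  simp

lemma Tan.mul {n : ℕ} {g h : ℕ → Mat n ℝ} {A B : Mat n ℝ} (hg : Tan g A) (hh : Tan h B) :
    Tan (fun k => g k * h k) (A + B) := by
  have h1 : Tendsto (fun k : ℕ => ((k : ℝ) • (g k - 1)) * h k + (k : ℝ) • (h k - 1)) atTop
      (𝓝 (A * 1 + B)) := (Tendsto.mul hg hh.tendsto).add hh
  rw [mul_one] at h1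
  refine h1.congr fun k => ?_
  rw [smul_mul_assoc, ← smul_add]
  congr 1
  noncomm_ring

lemma tan_psum {n : ℕ} (q : ℕ → Polynomial ℝ) (B : Mat n ℝ) (h0 : psum q B 0 = 1) (t : ℝ) :
    Tan (fun k : ℕ => psum q B (t * (k : ℝ)⁻¹))
      (t • psum (fun j => (q j).derivative) B 0) := by
  have hp : ∀ p : Polynomial ℝ, Tendsto (fun k : ℕ => (k : ℝ) *
      (p.eval (t * (k : ℝ)⁻¹) - p.eval 0)) atTop (𝓝 (t * p.derivative.eval 0)) := by
    intro p
    obtain ⟨r, hr⟩ : Polynomial.X ∣ p - Polynomial.C (p.eval 0) := by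
      rw [Polynomial.X_dvd_iff]; simp [Polynomial.coeff_zero_eq_eval_zero]
    have hr' : p = Polynomial.X * r + Polynomial.C (p.eval 0) := by rw [← hr]; ring
    have hd : p.derivative.eval 0 = r.eval 0 := by rw [hr']; simp
    have hl : Tendsto (fun k : ℕ => t * r.eval (t * (k : ℝ)⁻¹)) atTop (𝓝 (t * r.eval 0)) := by
      have h1 : Tendsto (fun k : ℕ => t * (k : ℝ)⁻¹) atTop (𝓝 0) := by
        simpa using (tendsto_inv_atTop_nhds_zero_nat (𝕜 := ℝ)).const_mul t
      exact ((r.continuous.tendsto 0).comp h1).const_mul t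
    rw [hd]
    refine hl.congr' ?_
    filter_upwards [eventually_ne_atTop 0] with k hk
    have hk' : (k : ℝ) ≠ 0 := by exact_mod_cast hk
    have := congrArg (Polynomial.eval (t * (k : ℝ)⁻¹)) hr
    simp only [Polynomial.eval_sub, Polynomial.eval_C, Polynomial.eval_mul,
      Polynomial.eval_X] at this
    rw [this]; field_simp
  have h2 : Tendsto (fun k : ℕ => ∑ j ∈ Finset.range (n + 2), ((k : ℝ) *
      ((q j).eval (t * (k : ℝ)⁻¹) - (q j).eval 0)) • B ^ j) atTop
      (𝓝 (∑ j ∈ Finset.range (n + 2), (t * (q j).derivative.eval 0) • B ^ j)) :=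
    tendsto_finsetSum _ fun j _ => (hp (q j)).smul_const _
  have h3 : t • psum (fun j => (q j).derivative) B 0 =
      ∑ j ∈ Finset.range (n + 2), (t * (q j).derivative.eval 0) • B ^ j := by
    simp [psum, Finset.smul_sum, smul_smul]
  unfold Tan
  rw [h3]
  refine h2.congr fun k => ?_
  rw [← h0]
  simp only [psum]
  rw [← Finset.sum_sub_distrib, Finset.smul_sum]
  refine Finset.sum_congr rfl fun j _ => ?_
  rw [← sub_smul, smul_smul]

/-- Truncated exponential. -/
def E {n : ℕ} (A : Mat n ℝ) : Mat n ℝ :=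
  ∑ j ∈ Finset.range (n + 2), ((j.factorial : ℝ)⁻¹) • A ^ j

lemma one_add_pow_nil {n : ℕ} {a : Mat n ℝ} (ha : a ∈ UTset n) (k : ℕ) :
    a ^ k = ∑ j ∈ Finset.range (n + 2), (k.choose j : ℝ) • (a - 1) ^ j := by
  have h1 : a = (a - 1) + 1 := by abel
  have hz : ∀ j, n ≤ j → (a - 1) ^ j = 0 := fun j hj => pow_eq_zero_of_le hj (ut_nil ha)
  conv_lhs => rw [h1]
  rw [(Commute.one_right (a - 1)).add_pow]
  have e1 : ∑ m ∈ Finset.range (k + 1), (a - 1) ^ m * 1 ^ (k - m) * (k.choose m : Mat n ℝ)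
      = ∑ m ∈ Finset.range (k + 1), (k.choose m : ℝ) • (a - 1) ^ m := by
    refine Finset.sum_congr rfl fun m _ => ?_
    rw [one_pow, mul_one, ← nsmul_eq_mul', Nat.cast_smul_eq_nsmul]
  rw [e1]
  have e2 : ∀ N M : ℕ, N ≤ M → (∀ j, N ≤ j → (k.choose j : ℝ) • (a - 1) ^ j = 0) →
      ∑ j ∈ Finset.range N, (k.choose j : ℝ) • (a - 1) ^ j =
      ∑ j ∈ Finset.range M, (k.choose j : ℝ) • (a - 1) ^ j := by
    intro N M hNM h
    refine Finset.sum_subset (Finset.range_mono hNM) fun j _ hj => h j ?_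
    simpa using hj
  rw [e2 (k + 1) (k + 1 + (n + 2)) (by omega)
      (fun j hj => by rw [Nat.choose_eq_zero_of_lt (by omega)]; simp),
    e2 (n + 2) (k + 1 + (n + 2)) (by omega) (fun j hj => by rw [hz j (by omega)]; simp)]

lemma Tan.pow {n : ℕ} {g : ℕ → Mat n ℝ} {A : Mat n ℝ} (h : Tan g A)
    (hg : ∀ k, g k ∈ UTset n) : Tendsto (fun k => g k ^ k) atTop (𝓝 (E A)) := by
  have hc : ∀ j : ℕ, Tendsto (fun k : ℕ => (k.choose j : ℝ) * ((k : ℝ)⁻¹) ^ j) atTop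
      (𝓝 ((j.factorial : ℝ)⁻¹)) := by
    intro j
    have h1 : Tendsto (fun k : ℕ => (k : ℝ) * (k : ℝ)⁻¹) atTop (𝓝 1) := by
      refine tendsto_const_nhds.congr' ?_
      filter_upwards [eventually_ne_atTop 0] with k hk
      rw [mul_inv_cancel₀ (by exact_mod_cast hk)]
    simpa using ProbabilityTheory.tendsto_choose_mul_pow_atTop j h1
  have h2 : Tendsto (fun k : ℕ => ∑ j ∈ Finset.range (n + 2),
      ((k.choose j : ℝ) * ((k : ℝ)⁻¹) ^ j) • ((k : ℝ) • (g k - 1)) ^ j) atTop (𝓝 (E A)) :=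
    tendsto_finsetSum _ fun j _ => (hc j).smul (Tendsto.pow h j)
  refine h2.congr' ?_
  filter_upwards [eventually_ne_atTop 0] with k hk
  have hk' : (k : ℝ) ≠ 0 := by exact_mod_cast hk
  rw [one_add_pow_nil (hg k) k]
  refine Finset.sum_congr rfl fun j _ => ?_
  rw [smul_pow, smul_smul, mul_assoc, ← mul_pow, inv_mul_cancel₀ hk', one_pow, mul_one]

lemma E_zero {n : ℕ} : E (0 : Mat n ℝ) = 1 := by
  unfold E
  rw [Finset.sum_eq_single 0]
  · simp
  · intro j _ hj; simp [hj]
  · simp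

lemma E_cont {n : ℕ} : Continuous (E : Mat n ℝ → Mat n ℝ) := by
  unfold E; fun_prop

/-- Coefficients of the exponential curve. -/
def ecoef (j : ℕ) : Polynomial ℝ := Polynomial.C ((j.factorial : ℝ)⁻¹) * Polynomial.X ^ j

lemma E_smul {n : ℕ} (A : Mat n ℝ) (t : ℝ) : E (t • A) = psum ecoef A t := by
  simp [E, psum, ecoef, smul_pow, smul_smul]

lemma tan_E {n : ℕ} (A : Mat n ℝ) : Tan (fun k : ℕ => E ((k : ℝ)⁻¹ • A)) A := by
  have h0 : psum ecoef A 0 = 1 := by rw [← E_smul, zero_smul, E_zero]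
  have h := tan_psum ecoef A h0 1
  have hd : psum (fun j => (ecoef j).derivative) A 0 = A := by
    unfold psum
    rw [Finset.sum_eq_single 1]
    · simp [ecoef]
    · intro j _ hj
      rcases j with _ | _ | j
      · simp [ecoef]
      · simp at hj
      · simp [ecoef]
    · simp
  rw [hd, one_smul] at h
  simpa only [one_mul, E_smul] using h

/-- Coefficients of the binomial curve. -/
def bcoef (j : ℕ) : Polynomial ℝ := Polynomial.C ((j.factorial : ℝ)⁻¹) * descPochhammer ℝ j

/-- Real powers of a unipotent matrix. -/
def pw {n : ℕ} (a : Mat n ℝ) (t : ℝ) : Mat n ℝ := psum bcoef (a - 1) t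

/-- Logarithm of a unipotent matrix. -/
def Lg {n : ℕ} (a : Mat n ℝ) : Mat n ℝ := psum (fun j => (bcoef j).derivative) (a - 1) 0

lemma Lg_cont {n : ℕ} : Continuous (Lg : Mat n ℝ → Mat n ℝ) := by
  unfold Lg psum; fun_prop

lemma Lg_one {n : ℕ} : Lg (1 : Mat n ℝ) = 0 := by
  unfold Lg psum
  refine Finset.sum_eq_zero fun j _ => ?_
  rcases j with _ | j
  · simp [bcoef]
  · simp

lemma pw_poly {n : ℕ} (a : Mat n ℝ) : PolyCurve (pw a) := psum_poly _ _

lemma pw_nat {n : ℕ} {a : Mat n ℝ} (ha : a ∈ UTset n) (k : ℕ) : pw a k = a ^ k := by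
  rw [one_add_pow_nil ha, pw, psum]
  refine Finset.sum_congr rfl fun j _ => ?_
  rw [Nat.cast_choose_eq_descPochhammer_div]
  simp [bcoef, div_eq_inv_mul]

lemma pw_pow {n : ℕ} {a : Mat n ℝ} (ha : a ∈ UTset n) (k : ℕ) (t : ℝ) :
    pw a t ^ k = pw a (k * t) := by
  refine PolyCurve.ext ((pw_poly a).pow k) ((pw_poly a).comp k) (fun m => ?_) t
  rw [pw_nat ha, ← Nat.cast_mul, pw_nat ha, ← pow_mul, mul_comm]

lemma pw_mem {n : ℕ} {K : Set (Mat n ℝ)} (hK : IsRealUnipotentGroup n K) {a : Mat n ℝ}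
    (ha : a ∈ K) (t : ℝ) : pw a t ∈ K :=
  (pw_poly a).mem hK (fun k => by rw [pw_nat (alg_ut hK ha)]; exact alg_pow hK ha k) t

lemma tan_pw {n : ℕ} {a : Mat n ℝ} (ha : a ∈ UTset n) (t : ℝ) :
    Tan (fun k : ℕ => pw a (t * (k : ℝ)⁻¹)) (t • Lg a) := by
  refine tan_psum bcoef (a - 1) ?_ t
  simpa [pw] using pw_nat ha 0

lemma E_Lg {n : ℕ} {K : Set (Mat n ℝ)} (hK : IsRealUnipotentGroup n K) {a : Mat n ℝ}
    (ha : a ∈ K) (t : ℝ) : E (t • Lg a) = pw a t := by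
  have h1 := (tan_pw (alg_ut hK ha) t).pow (fun k => alg_ut hK (pw_mem hK ha _))
  refine tendsto_nhds_unique h1 (tendsto_const_nhds.congr' ?_)
  filter_upwards [eventually_ne_atTop 0] with k hk
  have hk' : (k : ℝ) ≠ 0 := by exact_mod_cast hk
  rw [pw_pow (alg_ut hK ha)]
  congr 1; field_simp

lemma E_Lg_one {n : ℕ} {K : Set (Mat n ℝ)} (hK : IsRealUnipotentGroup n K) {a : Mat n ℝ}
    (ha : a ∈ K) : E (Lg a) = a := by
  have h1 := E_Lg hK ha 1
  have h2 := pw_nat (alg_ut hK ha) 1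
  rw [one_smul] at h1
  rw [h1]
  simpa using h2

lemma Tan.mem {n : ℕ} {K : Set (Mat n ℝ)} (hK : IsRealUnipotentGroup n K) {g : ℕ → Mat n ℝ}
    {A : Mat n ℝ} (h : Tan g A) (hg : ∀ k, g k ∈ K) : E A ∈ K :=
  (alg_closed hK).mem_of_tendsto (h.pow fun k => alg_ut hK (hg k))
    (Eventually.of_forall fun k => alg_pow hK (hg k) k)

/-- The Lie algebra of a real unipotent group. -/
def lie {n : ℕ} {K : Set (Mat n ℝ)} (hK : IsRealUnipotentGroup n K) : Submodule ℝ (Mat n ℝ) where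
  carrier := {A | ∀ t : ℝ, E (t • A) ∈ K}
  zero_mem' := fun t => by rw [smul_zero, E_zero]; exact hK.2.1
  smul_mem' := fun c A hA t => by rw [smul_smul]; exact hA _
  add_mem' := by
    intro A B hA hB t
    have h := (tan_E (t • A)).mul (tan_E (t • B))
    rw [smul_add]
    refine h.mem hK fun k => hK.2.2.1 _ ?_ _ ?_
    · rw [smul_smul]; exact hA _
    · rw [smul_smul]; exact hB _

lemma exists_proj {V : Type*} [AddCommGroup V] [Module ℝ V] (p q : Submodule ℝ V) :
    ∃ P : V →ₗ[ℝ] V, ∀ x ∈ p, ∀ y ∈ q, P (x + y) ∈ p ∧ (x + y) - P (x + y) ∈ q := by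
  let f : (p × q) →ₗ[ℝ] V := LinearMap.coprod p.subtype q.subtype
  obtain ⟨g, hg⟩ := f.rangeRestrict.exists_rightInverse_of_surjective f.range_rangeRestrict
  obtain ⟨g', hg'⟩ := LinearMap.exists_extend g
  refine ⟨p.subtype ∘ₗ LinearMap.fst ℝ p q ∘ₗ g', fun x hx y hy => ?_⟩
  have hz : f (⟨x, hx⟩, ⟨y, hy⟩) = x + y := rfl
  have h1 : f (g' (x + y)) = x + y := by
    have h2 := LinearMap.congr_fun hg' (f.rangeRestrict (⟨x, hx⟩, ⟨y, hy⟩))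
    have h3 := LinearMap.congr_fun hg (f.rangeRestrict (⟨x, hx⟩, ⟨y, hy⟩))
    rw [LinearMap.comp_apply, ← h2] at h3
    have h4 := congrArg Subtype.val h3
    exact h4
  have h5 : ((g' (x + y)).1 : V) + ((g' (x + y)).2 : V) = x + y := h1
  refine ⟨(g' (x + y)).1.2, ?_⟩
  have : x + y - (p.subtype ∘ₗ LinearMap.fst ℝ p q ∘ₗ g') (x + y) = (g' (x + y)).2 := by
    change x + y - ((g' (x + y)).1 : V) = _
    exact sub_eq_iff_eq_add'.2 h5.symm
  rw [this]
  exact (g' (x + y)).2.2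

lemma mul_pow_normal {n : ℕ} {G N : Set (Mat n ℝ)} (hG : IsRealUnipotentGroup n G)
    (hN : IsRealAlgSubgroup n G N) (hn : IsNormalIn n G N) {a y : Mat n ℝ} (ha : a ∈ G)
    (hy : y ∈ N) (k : ℕ) : (a ^ k)⁻¹ * (a * y) ^ k ∈ N := by
  induction k with
  | zero => simpa using hN.2.2.1
  | succ k ih =>
    have ua := alg_unit hG ha
    have h1 : (a ^ (k + 1))⁻¹ * (a * y) ^ (k + 1) =
        (a⁻¹ * ((a ^ k)⁻¹ * (a * y) ^ k) * a⁻¹⁻¹) * y := by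
      rw [Matrix.nonsing_inv_nonsing_inv _ ua, pow_succ a k, pow_succ (a * y) k,
        Matrix.mul_inv_rev]
      simp only [mul_assoc]
    rw [h1]
    exact hN.2.2.2.1 _ (hn _ (hG.2.2.2 _ ha) _ ih) _ hy

lemma pow_mul_normal {n : ℕ} {G N : Set (Mat n ℝ)} (hG : IsRealUnipotentGroup n G)
    (hN : IsRealAlgSubgroup n G N) (hn : IsNormalIn n G N) {a y : Mat n ℝ} (ha : a ∈ G)
    (hy : y ∈ N) (k : ℕ) : (a * y) ^ k * (a⁻¹) ^ k ∈ N := by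
  have h1 := hn _ (alg_pow hG ha k) _ (mul_pow_normal hG hN hn ha hy k)
  have u := alg_unit hG (alg_pow hG ha k)
  rw [Matrix.mul_nonsing_inv_cancel_left _ _ u, ← Matrix.inv_pow'] at h1
  exact h1

lemma key {n : ℕ} {G H N : Set (Mat n ℝ)} (hG : IsRealUnipotentGroup n G)
    (hH : IsRealAlgSubgroup n G H) (hN : IsRealAlgSubgroup n G N) (hn : IsNormalIn n G N) :
    ∃ φ : Mat n ℝ → Mat n ℝ, Continuous φ ∧ φ 1 = 1 ∧ ∀ h ∈ H, ∀ y ∈ N,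
      φ (h * y) ∈ H ∧ (φ (h * y))⁻¹ * (h * y) ∈ N := by
  obtain ⟨P, hP⟩ := exists_proj (lie hH.2) (lie hN.2)
  refine ⟨fun g => E (P (Lg g)), ?_, ?_, ?_⟩
  · exact E_cont.comp ((LinearMap.continuous_of_finiteDimensional P).comp Lg_cont)
  · simp [Lg_one, E_zero]
  intro h hh y hy
  have hgG : h * y ∈ G := hG.2.2.1 _ (hH.1 hh) _ (hN.1 hy)
  have hi : h⁻¹ ∈ H := hH.2.2.2.2 _ hh
  have hX : Lg h⁻¹ ∈ lie hH.2 := fun t => by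
    rw [E_Lg hH.2 hi]; exact pw_mem hH.2 hi t
  have hY : Lg (h * y) + Lg h⁻¹ ∈ lie hN.2 := by
    intro t
    rw [smul_add]
    refine ((tan_pw (alg_ut hG hgG) t).mul (tan_pw (alg_ut hH.2 hi) t)).mem hN.2 fun k => ?_
    refine ((pw_poly (h * y)).mul (pw_poly h⁻¹)).mem hN.2 (fun m => ?_) _
    rw [pw_nat (alg_ut hG hgG), pw_nat (alg_ut hH.2 hi)]
    exact pow_mul_normal hG hN hn (hH.1 hh) hy m
  have hPZ := hP _ ((lie hH.2).neg_mem hX) _ hY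
  have hZ : -Lg h⁻¹ + (Lg (h * y) + Lg h⁻¹) = Lg (h * y) := by abel
  rw [hZ] at hPZ
  obtain ⟨h1, h2⟩ := hPZ
  set Z := Lg (h * y)
  have hE1 : E (P Z) ∈ H := by simpa using h1 1
  refine ⟨hE1, ?_⟩
  have hEZ : E Z = h * y := E_Lg_one hG hgG
  have hk1 : ∀ k : ℕ, E ((k : ℝ)⁻¹ • P Z) ∈ G := fun k => hH.1 (h1 _)
  have hk2 : ∀ k : ℕ, E ((k : ℝ)⁻¹ • (Z - P Z)) ∈ N := fun k => h2 _
  have t1 := (tan_E (P Z)).pow fun k => alg_ut hG (hk1 k)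
  have t2 := ((tan_E (P Z)).mul (tan_E (Z - P Z))).pow fun k =>
    alg_ut hG (hG.2.2.1 _ (hk1 k) _ (hN.1 (hk2 k)))
  rw [add_sub_cancel, hEZ] at t2
  rw [ut_inv (alg_ut hH.2 hE1)]
  have t3 := (((continuous_id.matrix_adjugate).tendsto (E (P Z))).comp t1).mul t2
  refine (alg_closed hN.2).mem_of_tendsto t3 (Eventually.of_forall fun k => ?_)
  have := mul_pow_normal hG hN hn (hk1 k) (hk2 k) k
  rw [ut_inv (alg_ut hG (alg_pow hG (hk1 k) k))] at this
  exact this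

/-- Taking classes of sequences is a ring homomorphism. -/
def ofSeqHom : (ℕ → ℝ) →+* Hyperreal where
  toFun f := Hyperreal.ofSeq f
  map_one' := rfl
  map_mul' _ _ := rfl
  map_zero' := rfl
  map_add' _ _ := rfl

lemma matOfSeq_mul {n : ℕ} (u v : ℕ → Mat n ℝ) :
    matOfSeq n u * matOfSeq n v = matOfSeq n (fun k => u k * v k) := by
  ext i j
  have h : (fun k => (u k * v k) i j) = ∑ l, (fun k => u k i l) * (fun k => v k l j) := by
    ext k; simp [Matrix.mul_apply]
  have h2 : matOfSeq n (fun k => u k * v k) i j = ofSeqHom (fun k => (u k * v k) i j) := rfl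
  rw [h2, h, map_sum, Matrix.mul_apply]
  refine Finset.sum_congr rfl fun l _ => ?_
  rw [map_mul]; rfl

lemma ofSeq_eq {f g : ℕ → ℝ} :
    Hyperreal.ofSeq f = Hyperreal.ofSeq g ↔ ∀ᶠ k in hyperfilter ℕ, f k = g k := by
  rw [le_antisymm_iff, Hyperreal.ofSeq_le_ofSeq, Hyperreal.ofSeq_le_ofSeq, ← eventually_and]
  simp only [le_antisymm_iff]

lemma matOfSeq_eq {n : ℕ} {u v : ℕ → Mat n ℝ} :
    matOfSeq n u = matOfSeq n v ↔ ∀ᶠ k in hyperfilter ℕ, u k = v k := by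
  constructor
  · intro h
    have h1 : ∀ i j, ∀ᶠ k in (hyperfilter ℕ : Filter ℕ), u k i j = v k i j := fun i j =>
      ofSeq_eq.1 (congrFun (congrFun h i) j)
    have h2 := eventually_all.2 fun i => eventually_all.2 (h1 i)
    filter_upwards [h2] with k hk
    ext i j; exact hk i j
  · intro h
    ext i j
    refine ofSeq_eq.2 ?_
    filter_upwards [h] with k hk
    rw [hk]

lemma matCast_eq {n : ℕ} (b : Mat n ℝ) : matCast b = matOfSeq n (fun _ => b) := rfl

lemma mu_iff {n : ℕ} (u : ℕ → Mat n ℝ) :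
    (∀ i j, Hyperreal.Infinitesimal (matOfSeq n u i j - (1 : Mat n Hyperreal) i j)) ↔
      Tendsto u (hyperfilter ℕ) (𝓝 1) := by
  have h1 : ∀ i j, matOfSeq n u i j - (1 : Mat n Hyperreal) i j =
      Hyperreal.ofSeq (fun k => u k i j - (1 : Mat n ℝ) i j) := by
    intro i j
    have : (1 : Mat n Hyperreal) i j = Hyperreal.ofSeq (fun _ => (1 : Mat n ℝ) i j) := by
      by_cases hij : i = j
      · subst hij; simp only [Matrix.one_apply_eq]; rfl
      · simp only [Matrix.one_apply_ne hij]; rfl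
    rw [this]; rfl
  have h2 : Tendsto u (hyperfilter ℕ) (𝓝 1) ↔
      ∀ i j, Tendsto (fun k => u k i j) (hyperfilter ℕ) (𝓝 ((1 : Mat n ℝ) i j)) :=
    tendsto_pi_nhds.trans (forall_congr' fun i => tendsto_pi_nhds)
  rw [h2]
  refine forall_congr' fun i => forall_congr' fun j => ?_
  rw [h1, Hyperreal.Infinitesimal, Hyperreal.isSt_ofSeq_iff_tendsto]
  exact tendsto_sub_nhds_zero_iff

lemma near_iff {n : ℕ} {G H : Set (Mat n ℝ)} {g : Mat n ℝ} {a : ℕ → Mat n ℝ} :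
    NearCoset n G g H (matOfSeq n a) ↔ ∃ u v : ℕ → Mat n ℝ,
      (∀ᶠ k in hyperfilter ℕ, u k ∈ G) ∧ Tendsto u (hyperfilter ℕ) (𝓝 1) ∧
      (∀ᶠ k in hyperfilter ℕ, v k ∈ H) ∧ ∀ᶠ k in hyperfilter ℕ, u k * (g * v k) = a k := by
  constructor
  · rintro ⟨_, ⟨⟨u, hu, rfl⟩, hu'⟩, _, ⟨_, rfl, _, ⟨v, hv, rfl⟩, rfl⟩, h⟩
    refine ⟨u, v, hu, (mu_iff u).1 hu', hv, ?_⟩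
    simp only [matCast_eq, matOfSeq_mul] at h
    exact matOfSeq_eq.1 h
  · rintro ⟨u, v, hu, hu', hv, h⟩
    refine ⟨matOfSeq n u, ⟨⟨u, hu, rfl⟩, (mu_iff u).2 hu'⟩, _,
      ⟨matCast g, rfl, matOfSeq n v, ⟨v, hv, rfl⟩, rfl⟩, ?_⟩
    simp only [matCast_eq, matOfSeq_mul]
    exact matOfSeq_eq.2 h

lemma tendsto_inv_ut {n : ℕ} {G : Set (Mat n ℝ)} (hG : IsRealUnipotentGroup n G)
    {l : Filter ℕ} {u : ℕ → Mat n ℝ} {a : Mat n ℝ} (ha : a ∈ G)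
    (hu : ∀ᶠ k in l, u k ∈ G) (h : Tendsto u l (𝓝 a)) :
    Tendsto (fun k => (u k)⁻¹) l (𝓝 a⁻¹) := by
  rw [ut_inv (alg_ut hG ha)]
  refine (((continuous_id.matrix_adjugate).tendsto a).comp h).congr' ?_
  filter_upwards [hu] with k hk
  rw [ut_inv (alg_ut hG hk)]; rfl

/-- if `bN` and `cH` are near `α` with `N` normal, then `bN ∩ cH` is a
nonempty coset of `N ∩ H` near `α`. -/
theorem stmt4 {n : ℕ} (G : Set (Mat n ℝ)) (hG : IsRealUnipotentGroup n G)
    (H N : Set (Mat n ℝ)) (hH : IsRealAlgSubgroup n G H) (hN : IsRealAlgSubgroup n G N)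
    (hNnormal : IsNormalIn n G N)
    (α : Mat n Hyperreal) (hα : α ∈ matSharp n G)
    (b c : Mat n ℝ) (hb : b ∈ G) (hc : c ∈ G)
    (hnearN : NearCoset n G b N α) (hnearH : NearCoset n G c H α) :
    (({b} * N) ∩ ({c} * H)).Nonempty ∧
    ∀ e ∈ ({b} * N) ∩ ({c} * H),
      ({b} * N) ∩ ({c} * H) = {e} * (N ∩ H) ∧ NearCoset n G e (N ∩ H) α := by
  obtain ⟨a, ha, rfl⟩ := hα
  obtain ⟨u, v, hu, hu1, hv, huv⟩ := near_iff.1 hnearN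
  obtain ⟨w, x, hw, hw1, hx, hwx⟩ := near_iff.1 hnearH
  obtain ⟨φ, hφc, hφ1, hφ⟩ := key hG hH hN hNnormal
  have Gm := hG.2.2.1
  have Gi := hG.2.2.2
  have Hm := hH.2.2.2.1
  have Hi := hH.2.2.2.2
  have Nm := hN.2.2.2.1
  have Ni := hN.2.2.2.2
  have c1 : ∀ {y : Mat n ℝ}, y ∈ G → ∀ z : Mat n ℝ, y⁻¹ * (y * z) = z := fun hy z =>
    Matrix.nonsing_inv_mul_cancel_left _ _ (alg_unit hG hy)
  have c2 : ∀ {y : Mat n ℝ}, y ∈ G → ∀ z : Mat n ℝ, y * (y⁻¹ * z) = z := fun hy z =>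
    Matrix.mul_nonsing_inv_cancel_left _ _ (alg_unit hG hy)
  have c3 : ∀ {y : Mat n ℝ}, y ∈ G → y * y⁻¹ = 1 := fun hy =>
    Matrix.mul_nonsing_inv _ (alg_unit hG hy)
  have c4 : ∀ {y : Mat n ℝ}, y ∈ G → y⁻¹ * y = 1 := fun hy =>
    Matrix.nonsing_inv_mul _ (alg_unit hG hy)
  have hwi : Tendsto (fun k => (w k)⁻¹) (hyperfilter ℕ) (𝓝 1) := by
    simpa using tendsto_inv_ut hG hG.2.1 hw hw1
  constructor
  · -- the sequence `x v⁻¹ = c⁻¹ w⁻¹ u b` in `HN` converges to `c⁻¹ b`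
    have hev : ∀ᶠ k in (hyperfilter ℕ : Filter ℕ),
        x k * (v k)⁻¹ = c⁻¹ * ((w k)⁻¹ * (u k * b)) := by
      filter_upwards [hw, hv, huv, hwx] with k h1 h2 h3 h4
      have h5 : u k * b = a k * (v k)⁻¹ := by
        rw [← h3]; simp only [mul_assoc, c3 (hN.1 h2), mul_one]
      rw [h5, ← h4]
      simp only [mul_assoc, c1 h1, c1 hc]
    have ht : Tendsto (fun k => x k * (v k)⁻¹) (hyperfilter ℕ) (𝓝 (c⁻¹ * b)) := by
      have h1 : Tendsto (fun k => c⁻¹ * ((w k)⁻¹ * (u k * b))) (hyperfilter ℕ)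
          (𝓝 (c⁻¹ * (1 * (1 * b)))) :=
        (hwi.mul (hu1.mul_const b)).const_mul c⁻¹
      rw [one_mul, one_mul] at h1
      exact h1.congr' (hev.mono fun k hk => hk.symm)
    have hφt := (hφc.tendsto (c⁻¹ * b)).comp ht
    have hm : ∀ᶠ k in (hyperfilter ℕ : Filter ℕ), φ (x k * (v k)⁻¹) ∈ H ∧
        (φ (x k * (v k)⁻¹))⁻¹ * (x k * (v k)⁻¹) ∈ N := by
      filter_upwards [hv, hx] with k h1 h2
      exact hφ _ h2 _ (Ni _ h1)
    have hφH : φ (c⁻¹ * b) ∈ H :=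
      (alg_closed hH.2).mem_of_tendsto hφt (hm.mono fun k hk => hk.1)
    have hφN : (φ (c⁻¹ * b))⁻¹ * (c⁻¹ * b) ∈ N :=
      (alg_closed hN.2).mem_of_tendsto
        ((tendsto_inv_ut hH.2 hφH (hm.mono fun k hk => hk.1) hφt).mul ht)
        (hm.mono fun k hk => hk.2)
    refine ⟨c * φ (c⁻¹ * b), ⟨b, rfl, _, Ni _ hφN, ?_⟩, ⟨c, rfl, _, hφH, rfl⟩⟩
    have hg : c⁻¹ * b ∈ G := Gm _ (Gi _ hc) _ hb
    change b * ((φ (c⁻¹ * b))⁻¹ * (c⁻¹ * b))⁻¹ = _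
    have h1 : b = c * φ (c⁻¹ * b) * ((φ (c⁻¹ * b))⁻¹ * (c⁻¹ * b)) := by
      rw [mul_assoc, c2 (hH.1 hφH), c2 hc]
    generalize ((φ (c⁻¹ * b))⁻¹ * (c⁻¹ * b)) = m at h1 hφN
    generalize φ (c⁻¹ * b) = r at h1
    rw [h1, mul_assoc, c3 (hN.1 hφN), mul_one]
  · rintro e ⟨heN, heH⟩
    rw [Set.singleton_mul] at heN heH
    obtain ⟨n1, hn1, rfl⟩ := heN
    obtain ⟨h1, hh1, he⟩ := heH
    change _ = _ ∧ NearCoset n G (b * n1) _ _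
    have heq : c * h1 = b * n1 := he
    have heG : b * n1 ∈ G := Gm _ hb _ (hN.1 hn1)
    constructor
    · ext y
      constructor
      · rintro ⟨hyN, hyH⟩
        rw [Set.singleton_mul] at hyN hyH
        obtain ⟨m, hm, rfl⟩ := hyN
        obtain ⟨h, hh, hy⟩ := hyH
        have hy' : c * h = b * m := hy
        refine ⟨_, rfl, n1⁻¹ * m, ⟨Nm _ (Ni _ hn1) _ hm, ?_⟩, ?_⟩
        · have : n1⁻¹ * m = h1⁻¹ * h := by
            have e1 : m = n1 * (h1⁻¹ * h) := by
              have e2 : b * m = b * (n1 * (h1⁻¹ * h)) := by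
                rw [← mul_assoc b, ← heq, mul_assoc, c2 (hH.1 hh1), hy']
              rw [← c1 hb m, e2, c1 hb]
            rw [e1, c1 (hN.1 hn1)]
          rw [this]; exact Hm _ (Hi _ hh1) _ hh
        · change b * n1 * (n1⁻¹ * m) = b * m
          rw [mul_assoc, c2 (hN.1 hn1)]
      · intro hy
        rw [Set.singleton_mul] at hy
        obtain ⟨z, ⟨hzN, hzH⟩, rfl⟩ := hy
        refine ⟨⟨b, rfl, n1 * z, Nm _ hn1 _ hzN, ?_⟩, ⟨c, rfl, h1 * z, Hm _ hh1 _ hzH, ?_⟩⟩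
        · change b * (n1 * z) = b * n1 * z
          rw [mul_assoc]
        · change c * (h1 * z) = b * n1 * z
          rw [← heq, mul_assoc]
    · generalize hedef : b * n1 = e at *
      -- `g = (h1⁻¹ x) (n1⁻¹ v)⁻¹ = e⁻¹ w⁻¹ u e → 1`
      let g : ℕ → Mat n ℝ := fun k => (h1⁻¹ * x k) * (n1⁻¹ * v k)⁻¹
      have hev : ∀ᶠ k in (hyperfilter ℕ : Filter ℕ), g k = e⁻¹ * ((w k)⁻¹ * (u k * e)) := by
        filter_upwards [hw, hv, huv, hwx] with k k1 k2 k3 k4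
        have hmN : n1⁻¹ * v k ∈ N := Nm _ (Ni _ hn1) _ k2
        have k5 : u k * (e * (n1⁻¹ * v k)) = w k * (e * (h1⁻¹ * x k)) := by
          have k6 : e * (n1⁻¹ * v k) = b * v k := by
            rw [← hedef, mul_assoc, c2 (hN.1 hn1)]
          have k7 : e * (h1⁻¹ * x k) = c * x k := by
            rw [← heq, mul_assoc, c2 (hH.1 hh1)]
          rw [k6, k7, k3, k4]
        have k8 : u k * e = w k * (e * (h1⁻¹ * x k)) * (n1⁻¹ * v k)⁻¹ := by
          rw [← k5]; simp only [mul_assoc]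
          rw [← mul_assoc n1⁻¹, c3 (hN.1 hmN), mul_one]
        rw [k8]
        simp only [g, mul_assoc, c1 k1, c1 heG]
      have hgt : Tendsto g (hyperfilter ℕ) (𝓝 1) := by
        have t1 : Tendsto (fun k => e⁻¹ * ((w k)⁻¹ * (u k * e))) (hyperfilter ℕ)
            (𝓝 (e⁻¹ * (1 * (1 * e)))) :=
          (hwi.mul (hu1.mul_const e)).const_mul e⁻¹
        rw [one_mul, one_mul, c4 heG] at t1
        exact t1.congr' (hev.mono fun k hk => hk.symm)
      have hφt : Tendsto (fun k => φ (g k)) (hyperfilter ℕ) (𝓝 1) := by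
        have := (hφc.tendsto 1).comp hgt
        rwa [hφ1] at this
      have hm : ∀ᶠ k in (hyperfilter ℕ : Filter ℕ), φ (g k) ∈ H ∧ (φ (g k))⁻¹ * g k ∈ N := by
        filter_upwards [hv, hx] with k k1 k2
        exact hφ _ (Hm _ (Hi _ hh1) _ k2) _ (Ni _ (Nm _ (Ni _ hn1) _ k1))
      refine near_iff.2 ⟨fun k => w k * (e * (φ (g k) * e⁻¹)),
        fun k => (φ (g k))⁻¹ * (h1⁻¹ * x k), ?_, ?_, ?_, ?_⟩
      · filter_upwards [hw, hm] with k k1 k2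
        exact Gm _ k1 _ (Gm _ heG _ (Gm _ (hH.1 k2.1) _ (Gi _ heG)))
      · have t1 := hw1.mul ((hφt.mul_const e⁻¹).const_mul e)
        rwa [one_mul, one_mul, c3 heG] at t1
      · filter_upwards [hm, hv, hx] with k k1 k2 k3
        have hmN : n1⁻¹ * v k ∈ N := Nm _ (Ni _ hn1) _ k2
        refine ⟨?_, Hm _ (Hi _ k1.1) _ (Hm _ (Hi _ hh1) _ k3)⟩
        have k4 : h1⁻¹ * x k = g k * (n1⁻¹ * v k) := by
          change _ = (h1⁻¹ * x k) * (n1⁻¹ * v k)⁻¹ * (n1⁻¹ * v k)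
          rw [mul_assoc (h1⁻¹ * x k), c4 (hN.1 hmN), mul_one]
        rw [k4, ← mul_assoc]
        exact Nm _ k1.2 _ hmN
      · filter_upwards [hm, hwx] with k k1 k2
        have k7 : e * (h1⁻¹ * x k) = c * x k := by
          rw [← heq, mul_assoc, c2 (hH.1 hh1)]
        simp only [mul_assoc, c1 heG, c2 (hH.1 k1.1)]
        rw [k7, k2]
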